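/- Let R be a Dedekind domain with torsion class group and O ⊆ R an order with conductor f, R/f finite, and every class of Cl(R) containing a prime coprime to f. If O is transfer Krull (via a Krull overmonoid H of O^•) and Pic(O) ≅ Cl(R), then O ⊆ R is a root extension, i.e., for every a ∈ R there exists n ∈ ℕ with a^n ∈ O; equivalently, the map Spec(R) → Spec(O), P ↦ P ∩ O, is bijective. -/

import Mathlib

open scoped nonZeroDivisors

section MonoidDefs
variable {H B : Type*} [CommMonoid H] [CommMonoid B]

/-- The set of lengths of `a`: `{0}` for units, otherwise the set of `k` such that
`a` is a product of `k` atoms (irreducible elements). -/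
def lengthsSet (a : H) : Set ℕ :=
  {k | (IsUnit a ∧ k = 0) ∨
    (¬ IsUnit a ∧ ∃ l : Multiset H, Multiset.card l = k ∧ (∀ x ∈ l, Irreducible x) ∧ l.prod = a)}

/-- A transfer homomorphism: (T1) `B = θ(H)·B^×` and `θ⁻¹(B^×) = H^×`;
(T2) factorizations of `θ u` lift to factorizations of `u` up to associates. -/
def IsTransferHom (θ : H →* B) : Prop :=
  (∀ b : B, ∃ u : H, ∃ ε : Bˣ, b = θ u * ε) ∧
  (∀ u : H, IsUnit (θ u) → IsUnit u) ∧
  (∀ u : H, ∀ b c : B, θ u = b * c →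
    ∃ v w : H, u = v * w ∧ Associated (θ v) b ∧ Associated (θ w) c)

/-- A Krull monoid: a monoid admitting a divisor homomorphism into a
free abelian monoid. -/
def IsKrullMonoid (H : Type*) [CommMonoid H] : Prop :=
  ∃ (ι : Type) (d : H →* Multiplicative (ι →₀ ℕ)), ∀ a b : H, d a ∣ d b → a ∣ b

/-- Half-factorial: all factorizations of an element into atoms have the same length. -/
def IsHalfFactorial (A : Type*) [CommMonoid A] : Prop :=
  ∀ (a : A) (l m : Multiset A), (∀ x ∈ l, Irreducible x) → (∀ x ∈ m, Irreducible x) →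
    l.prod = a → m.prod = a → Multiset.card l = Multiset.card m

/-- An absolutely irreducible element: an atom all of whose powers factor uniquely
into atoms, up to associates. -/
def AbsolutelyIrreducible (a : H) : Prop :=
  Irreducible a ∧ ∀ n : ℕ, 0 < n → ∀ l m : Multiset H,
    (∀ x ∈ l, Irreducible x) → (∀ x ∈ m, Irreducible x) →
    l.prod = a ^ n → m.prod = a ^ n → Multiset.Rel Associated l m

end MonoidDefs

section RingDefs
variable {R : Type*} [CommRing R]

/-- The conductor of a subring `O ⊆ R`: the largest ideal of `R` contained in `O`. -/
def Subring.conductor (O : Subring R) : Ideal R where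
  carrier := {x | ∀ r : R, x * r ∈ O}
  add_mem' := by
    intro a b ha hb r
    have h : (a + b) * r = a * r + b * r := by ring
    rw [h]; exact O.add_mem (ha r) (hb r)
  zero_mem' := by intro r; simpa using O.zero_mem
  smul_mem' := by
    intro c x hx r
    have h : c • x * r = x * (c * r) := by simp [smul_eq_mul]; ring
    rw [h]; exact hx (c * r)

/-- `a` is a regular element modulo the ideal `f`. -/
def RegF (f : Ideal R) (a : R) : Prop := IsUnit (Ideal.Quotient.mk f a)

end RingDefs

section TK
variable {K : Type*} [CommRing K]

/-- `x` and `y` are associated within the submonoid `H` of `K`. -/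
def AssocIn (H : Submonoid K) (x y : K) : Prop :=
  ∃ ε ∈ H, (∃ ε' ∈ H, ε * ε' = 1) ∧ x = y * ε

end TK

variable {R₀ : Type*}

/-- `H` is a Krull overmonoid of `O^∙` inside the quotient field of `O` (which is the
quotient field of `R`), with `O^∙ ⊆ H ⊆ q(O^∙)`, such that the inclusion `O^∙ ↪ H`
is a transfer homomorphism; this witnesses that `O` is transfer Krull. -/
structure IsTKOvermonoid {R : Type*} [CommRing R] [IsDomain R] [IsDedekindDomain R]
    (O : Subring R) (H : Submonoid (FractionRing R)) : Prop where
  nonzero : ∀ x ∈ H, x ≠ 0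
  incl : ∀ a : R, a ∈ O → a ≠ 0 → algebraMap R (FractionRing R) a ∈ H
  inQuot : ∀ x ∈ H, ∃ a b : R, a ∈ O ∧ b ∈ O ∧ a ≠ 0 ∧ b ≠ 0 ∧
    x * algebraMap R (FractionRing R) b = algebraMap R (FractionRing R) a
  krull : IsKrullMonoid ↥H
  t1 : ∀ x ∈ H, ∃ a : R, a ∈ O ∧ a ≠ 0 ∧ ∃ ε ∈ H, (∃ ε' ∈ H, ε * ε' = 1) ∧
    x = algebraMap R (FractionRing R) a * ε
  t1' : ∀ a : R, a ∈ O → a ≠ 0 →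
    (∃ y ∈ H, algebraMap R (FractionRing R) a * y = 1) → ∃ b ∈ O, a * b = 1
  t2 : ∀ a : R, a ∈ O → a ≠ 0 → ∀ x ∈ H, ∀ y ∈ H,
    algebraMap R (FractionRing R) a = x * y →
    ∃ v w : R, v ∈ O ∧ w ∈ O ∧ a = v * w ∧
      AssocIn H (algebraMap R (FractionRing R) v) x ∧
      AssocIn H (algebraMap R (FractionRing R) w) y

/-!
Let `f` be the conductor. Some power of every `a : R` is idempotent modulo `f`, and an idempotent of
the finite ring `R ⧸ f` comes from `O` as soon as its zero locus is a union of fibres of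
`Spec R → Spec O`. So it suffices to show that these fibres are singletons.

The Krull monoid `H` is completely integrally closed, hence contains all nonzero elements of `R`.
Suppose that `P ≠ Q` both lie over `p`. As the class group is torsion, some `r` lies in exactly the
primes over `p`. If `x` lies only in primes over `p` and `x ∉ Q`, then `x` is a unit of `H`:
otherwise the `j * n` factors `x` of a power `(r * x ^ j) ^ n` in `O` transfer to nonunits of `O`,
all of them in `p`, which forces `r ∈ Q ^ j` for every `j`. By symmetry the same holds for `P`. Now
write a power of `r` as `x ^ e * y` with `x` a generator of a power of `P` and `y ∉ P`. Both
`x ∉ Q` and `y ∉ P` are units of `H`, hence so is `r`, and a power of `r` is a unit of `O`, a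
contradiction.
-/

lemma exists_pow_isIdempotentElem {M : Type*} [Monoid M] [Finite M] (a : M) :
    ∃ n, n ≠ 0 ∧ IsIdempotentElem (a ^ n) := by
  let : TopologicalSpace M := ⊥
  have : DiscreteTopology M := ⟨rfl⟩
  obtain ⟨_, ⟨n, hn, rfl⟩, hid⟩ := exists_idempotent_in_compact_subsemigroup
    (fun _ ↦ continuous_of_discreteTopology) {x : M | ∃ n, n ≠ 0 ∧ a ^ n = x}
    ⟨a, 1, one_ne_zero, pow_one a⟩ (Set.toFinite _).isCompact <| by
      rintro _ ⟨m, hm, rfl⟩ _ ⟨n, -, rfl⟩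
      exact ⟨m + n, by omega, pow_add a m n⟩
  exact ⟨n, hn, hid⟩

lemma ideal_ne_bot_of_finite_quotient {R : Type*} [CommRing R] [IsDomain R] (hR : ¬ IsField R)
    (I : Ideal R) [Finite (R ⧸ I)] : I ≠ ⊥ := by
  rintro rfl
  have : Finite R := .of_equiv _ (RingEquiv.quotientBot R).toEquiv
  exact hR (Finite.isField_of_domain R)

-- The image of `D(e)` in the discrete space `Spec A` is clopen, hence `D(b)` for an idempotent `b`;
-- saturation says that its preimage is `D(e)` again, and `D` is injective on idempotents.
lemma mem_range_of_isIdempotentElem {A B : Type*} [CommRing A] [CommRing B]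
    [DiscreteTopology (PrimeSpectrum A)] (φ : A →+* B) {e : B} (he : IsIdempotentElem e)
    (hsat : ∀ P Q : PrimeSpectrum B, PrimeSpectrum.comap φ P = PrimeSpectrum.comap φ Q →
      e ∈ P.asIdeal → e ∈ Q.asIdeal) : e ∈ φ.range := by
  obtain ⟨b, hb, hbs⟩ := PrimeSpectrum.exists_idempotent_basicOpen_eq_of_isClopen
    (isClopen_discrete (PrimeSpectrum.comap φ '' PrimeSpectrum.basicOpen e))
  refine ⟨b, PrimeSpectrum.basicOpen_injOn_isIdempotentElem (hb.map φ) he ?_⟩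
  ext P
  have hbP : P ∈ PrimeSpectrum.basicOpen (φ b) ↔
      PrimeSpectrum.comap φ P ∈ PrimeSpectrum.comap φ '' PrimeSpectrum.basicOpen e := by
    rw [hbs]; rfl
  refine hbP.trans ⟨?_, Set.mem_image_of_mem _⟩
  rintro ⟨Q, hQ, hQP⟩ heP
  exact hQ (hsat P Q hQP.symm heP)

section Conductor

variable {R : Type*} [CommRing R] (O : Subring R)

lemma conductor_subset : (O.conductor : Set R) ⊆ O := fun z hz ↦ by simpa using hz 1

variable [Finite (R ⧸ O.conductor)]

lemma isIntegral_of_finite_quotient_conductor : Algebra.IsIntegral O R := by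
  refine ⟨fun a ↦ ?_⟩
  nontriviality R
  obtain ⟨n, hn, hid⟩ := exists_pow_isIdempotentElem (Ideal.Quotient.mk O.conductor a)
  have hmem : (a ^ n) ^ 2 - a ^ n ∈ O := by
    refine conductor_subset O (Ideal.Quotient.eq.mp ?_)
    rw [map_pow, map_pow, sq, hid.eq]
  refine .of_pow (Nat.pos_of_ne_zero hn) (.of_aeval_monic (p := .X ^ 2 - .X) ?_ ?_ ?_)
  · monicity!
  · rw [show (Polynomial.X ^ 2 - Polynomial.X : Polynomial O).natDegree = 2 by compute_degree!]
    exact two_ne_zero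
  · simp only [map_sub, map_pow, Polynomial.aeval_X]
    exact isIntegral_algebraMap (R := O) (A := R) (x := ⟨_, hmem⟩)

lemma exists_pow_mem_of_saturated {a : R}
    (hsat : ∀ P Q : Ideal R, P.IsPrime → Q.IsPrime → P.under O = Q.under O → a ∈ P → a ∈ Q) :
    ∃ n, n ≠ 0 ∧ a ^ n ∈ O := by
  let π := Ideal.Quotient.mk O.conductor
  let ψ : O →+* R ⧸ O.conductor := π.comp O.subtype
  obtain ⟨n, hn, hid⟩ := exists_pow_isIdempotentElem (π a)
  obtain ⟨⟨_, b, rfl⟩, hb⟩ := mem_range_of_isIdempotentElem ψ.range.subtype hid <| by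
    intro P Q hPQ ha
    have hunder : (P.asIdeal.comap π).under O = (Q.asIdeal.comap π).under O :=
      congrArg (fun q ↦ (PrimeSpectrum.comap ψ.rangeRestrict q).asIdeal) hPQ
    exact Q.asIdeal.pow_mem_of_mem (hsat _ _ inferInstance inferInstance hunder
      (P.isPrime.mem_of_pow_mem n ha)) n (Nat.pos_of_ne_zero hn)
  have hmem : a ^ n - b ∈ O :=
    conductor_subset O (Ideal.Quotient.eq.mp ((map_pow π a n).trans hb.symm))
  exact ⟨n, hn, by simpa using O.add_mem hmem b.2⟩

end Conductor

section Fiber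

variable {A B : Type*} [CommRing A] [CommRing B] [Algebra A B]

/-- `CutsOutFiber p b` says that the zero locus of `b` in `Spec B` is exactly the fibre of
`Spec B → Spec A` over `p`. -/
def CutsOutFiber (p : Ideal A) (b : B) : Prop :=
  ∀ P : Ideal B, P.IsPrime → (b ∈ P ↔ P.under A = p)

namespace CutsOutFiber

variable {p : Ideal A} {b c : B}

lemma saturated (hb : CutsOutFiber p b) (P Q : Ideal B) (hP : P.IsPrime) (hQ : Q.IsPrime)
    (hPQ : P.under A = Q.under A) (h : b ∈ P) : b ∈ Q :=
  (hb Q hQ).mpr (hPQ ▸ (hb P hP).mp h)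

lemma pow (hb : CutsOutFiber p b) {n : ℕ} (hn : n ≠ 0) : CutsOutFiber p (b ^ n) :=
  fun P hP ↦ (hP.pow_mem_iff_mem n (Nat.pos_of_ne_zero hn)).trans (hb P hP)

lemma mul (hb : CutsOutFiber p b) (hc : ∀ P : Ideal B, P.IsPrime → c ∈ P → P.under A = p) :
    CutsOutFiber p (b * c) :=
  fun P hP ↦ ⟨fun h ↦ (hP.mem_or_mem h).elim (hb P hP).mp (hc P hP),
    fun h ↦ P.mul_mem_right c ((hb P hP).mpr h)⟩

lemma eq_of_isMaximal [Algebra.IsIntegral A B] [FaithfulSMul A B] {a : A}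
    (ha : CutsOutFiber p (algebraMap A B a)) {q : Ideal A} [q.IsMaximal] (haq : a ∈ q) :
    q = p := by
  obtain ⟨Q, hQ, hQq⟩ := Ideal.exists_maximal_ideal_liesOver_of_isIntegral (S := B) q
  rw [hQq.over] at haq ⊢
  exact (ha Q hQ.isPrime).mp haq

end CutsOutFiber

end Fiber

section Dedekind

variable {R : Type*} [CommRing R] [IsDedekindDomain R]

lemma exists_span_singleton_eq_pow (htor : IsMulTorsion (ClassGroup R)) {I : Ideal R}
    (hI : I ≠ ⊥) : ∃ (x : R) (m : ℕ), m ≠ 0 ∧ Ideal.span {x} = I ^ m := by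
  have hI' : I ∈ (Ideal R)⁰ := mem_nonZeroDivisors_of_ne_zero hI
  obtain ⟨m, hm, hIm⟩ := (htor (ClassGroup.mk0 ⟨I, hI'⟩)).exists_pow_eq_one
  rw [← map_pow] at hIm
  obtain ⟨x, hx⟩ := (ClassGroup.mk0_eq_one_iff (pow_mem hI' m)).mp hIm
  exact ⟨x, m, hm.ne', hx.symm⟩

lemma exists_cutsOutFiber {A : Type*} [CommRing A] [Algebra A R] [FaithfulSMul A R]
    (htor : IsMulTorsion (ClassGroup R)) {p : Ideal A} [hpmax : p.IsMaximal] (hp : p ≠ ⊥) :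
    ∃ r : R, r ≠ 0 ∧ CutsOutFiber p r := by
  have hpR : p.map (algebraMap A R) ≠ ⊥ := by
    rwa [Ne, Ideal.map_eq_bot_iff_of_injective (FaithfulSMul.algebraMap_injective A R)]
  obtain ⟨r, m, hm, hr⟩ := exists_span_singleton_eq_pow htor hpR
  refine ⟨r, ?_, fun M hM ↦ ?_⟩
  · rintro rfl
    exact pow_ne_zero m hpR (hr.symm.trans (by simp))
  · rw [← Ideal.span_singleton_le_iff_mem, hr, Ideal.IsPrime.pow_le_iff hm,
      Ideal.map_le_iff_le_comap]
    exact ⟨fun h ↦ (hpmax.eq_of_le (hM.under A).ne_top h).symm, fun h ↦ h.ge⟩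

lemma exists_pow_eq_pow_mul_notMem {P : Ideal R} [hP : P.IsPrime] {x : R} {m : ℕ}
    (hP0 : P ≠ ⊥) (hxP : Ideal.span {x} = P ^ m) {r : R} (hr : r ≠ 0) :
    ∃ (e : ℕ) (y : R), r ^ m = x ^ e * y ∧ y ∉ P := by
  have hPprime : Prime P := Ideal.prime_of_isPrime hP0 hP
  obtain ⟨J, hrJ, hPJ⟩ := (FiniteMultiplicity.of_prime_left hPprime
    (Ideal.span_singleton_eq_bot.not.mpr hr)).exists_eq_pow_mul_and_not_dvd
  set e := multiplicity P (Ideal.span {r})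
  have hspan : Ideal.span {r ^ m} = Ideal.span {x ^ e} * J ^ m := by
    rw [← Ideal.span_singleton_pow, ← Ideal.span_singleton_pow, hrJ, hxP, mul_pow, pow_right_comm]
  obtain ⟨y, -, hy⟩ := Ideal.mem_span_singleton_mul.mp (hspan ▸ Ideal.mem_span_singleton_self _)
  refine ⟨e, y, hy.symm, fun hyP ↦ hPJ (hPprime.dvd_of_dvd_pow (n := m) ?_)⟩
  rw [← hy, ← Ideal.span_singleton_mul_span_singleton] at hspan
  have hxe : Ideal.span {x ^ e} ≠ ⊥ := by
    rw [← Ideal.span_singleton_pow, hxP]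
    exact pow_ne_zero e (pow_ne_zero m hP0)
  rw [← mul_left_cancel₀ hxe hspan]
  exact Ideal.dvd_span_singleton.mpr hyP

end Dedekind

namespace IsKrullMonoid

-- Krull monoids are completely integrally closed.
lemma dvd_of_forall_pow_dvd_pow_succ {M : Type*} [CommMonoid M] (hM : IsKrullMonoid M) {a b : M}
    (h : ∀ k, a ^ k ∣ b ^ (k + 1)) : a ∣ b := by
  obtain ⟨ι, d, hd⟩ := hM
  have dvd_iff (u v : M) : d u ∣ d v ↔ (d u).toAdd ≤ (d v).toAdd :=
    (le_iff_exists_add (a := (d u).toAdd) (b := (d v).toAdd)).symm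
  refine hd a b ((dvd_iff a b).mpr fun i ↦ ?_)
  have hle (k : ℕ) : k * (d a).toAdd i ≤ (k + 1) * (d b).toAdd i := by
    simpa using (dvd_iff _ _).mp (map_dvd d (h k)) i
  by_contra! hlt
  have := hle ((d a).toAdd i)
  nlinarith

end IsKrullMonoid

namespace IsTKOvermonoid

variable {R : Type*} [CommRing R] [IsDedekindDomain R] {O : Subring R}
  {H : Submonoid (FractionRing R)}

lemma algebraMap_mem (hH : IsTKOvermonoid O H) (hO : O.conductor ≠ ⊥) {r : R} (hr : r ≠ 0) :
    algebraMap R (FractionRing R) r ∈ H := by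
  obtain ⟨c, hc, hc0⟩ := Submodule.exists_mem_ne_zero_of_ne_bot hO
  let h (k : ℕ) : H := ⟨algebraMap R _ (c * r ^ k),
    hH.incl _ (hc _) (mul_ne_zero hc0 (pow_ne_zero k hr))⟩
  have hpow (k : ℕ) : h 0 ^ k ∣ h 1 ^ (k + 1) := by
    refine ⟨h (k + 1), Subtype.ext ?_⟩
    simp only [h, SubmonoidClass.coe_pow, Submonoid.coe_mul, ← map_pow, ← map_mul]
    ring_nf
  obtain ⟨t, ht⟩ := hH.krull.dvd_of_forall_pow_dvd_pow_succ hpow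
  have hct : algebraMap R (FractionRing R) c * algebraMap R _ r = algebraMap R _ c * t := by
    simpa [h] using congrArg Subtype.val ht
  rw [mul_left_cancel₀ (by simpa using hc0) hct]
  exact t.2

lemma isUnit_of_inv_mem (hH : IsTKOvermonoid O H) {a : O} (ha : (a : R) ≠ 0)
    (hinv : (algebraMap R (FractionRing R) a)⁻¹ ∈ H) : IsUnit a := by
  obtain ⟨b, hb, hab⟩ := hH.t1' a a.2 ha ⟨_, hinv, mul_inv_cancel₀ (by simpa using ha)⟩
  exact .of_mul_eq_one ⟨b, hb⟩ (Subtype.ext hab)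

lemma isUnit_of_inv_mem_of_saturated [Finite (R ⧸ O.conductor)] (hH : IsTKOvermonoid O H) {a : R}
    (ha : a ≠ 0)
    (hsat : ∀ P Q : Ideal R, P.IsPrime → Q.IsPrime → P.under O = Q.under O → a ∈ P → a ∈ Q)
    (hinv : (algebraMap R (FractionRing R) a)⁻¹ ∈ H) : IsUnit a := by
  obtain ⟨n, hn, han⟩ := exists_pow_mem_of_saturated O hsat
  have hunit : IsUnit (⟨a ^ n, han⟩ : O) := by
    refine hH.isUnit_of_inv_mem (pow_ne_zero n ha) ?_
    simpa using pow_mem hinv n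
  exact (isUnit_pow_iff hn).mp (hunit.map O.subtype)

-- Each of the `k` factors `x` of `a` in `H` lifts by (T2) to a nonunit of `O`, which lies in `p`.
lemma mem_pow_of_eq_pow_mul (hH : IsTKOvermonoid O H) {p : Ideal O} {x : FractionRing R}
    (hx : x ∈ H) (hxinv : x⁻¹ ∉ H) {k : ℕ} {a : O} (ha : (a : R) ≠ 0)
    (hp : ∀ q : Ideal O, q.IsMaximal → a ∈ q → q = p) {y : FractionRing R} (hy : y ∈ H)
    (hay : algebraMap R (FractionRing R) a = x ^ k * y) : a ∈ p ^ k := by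
  induction k generalizing a y with
  | zero => simp
  | succ k ih =>
    obtain ⟨v, w, hv, hw, hvw, ⟨ε, hε, -, hvx⟩, ⟨δ, hδ, -, hwy⟩⟩ :=
      hH.t2 a a.2 ha x hx (x ^ k * y) (mul_mem (pow_mem hx k) hy) (by rw [hay]; ring)
    lift v to O using hv
    lift w to O using hw
    obtain rfl : a = v * w := Subtype.ext hvw
    have hv_nonunit : ¬ IsUnit v := by
      intro hv
      obtain ⟨b, hvb⟩ := hv.exists_right_inv
      have hvb' : (v : R) * b = 1 := congrArg Subtype.val hvb
      have hxb : x * (ε * algebraMap R _ b) = 1 := by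
        rw [← mul_assoc, ← hvx, ← map_mul, hvb', map_one]
      rw [inv_eq_of_mul_eq_one_right hxb] at hxinv
      exact hxinv (mul_mem hε (hH.incl b b.2 (right_ne_zero_of_mul_eq_one hvb')))
    obtain ⟨q, hq, hvq⟩ := exists_max_ideal_of_mem_nonunits hv_nonunit
    have hvp : v ∈ p := hp q hq (q.mul_mem_right w hvq) ▸ hvq
    have hwp : w ∈ p ^ k := ih (right_ne_zero_of_mul ha)
      (fun q hq hwq ↦ hp q hq (q.mul_mem_left v hwq)) (mul_mem hy hδ) (by rw [hwy, mul_assoc])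
    exact pow_succ' p k ▸ Ideal.mul_mem_mul hvp hwp

variable [Finite (R ⧸ O.conductor)]

lemma inv_mem_of_notMem (hH : IsTKOvermonoid O H) (hO : O.conductor ≠ ⊥) {p : Ideal O} {r x : R}
    (hr0 : r ≠ 0) (hr : CutsOutFiber p r) {Q : Ideal R} (hQ : Q.IsPrime) (hQp : Q.under O = p)
    (hxQ : x ∉ Q) (hx : ∀ P : Ideal R, P.IsPrime → x ∈ P → P.under O = p) :
    (algebraMap R (FractionRing R) x)⁻¹ ∈ H := by
  by_contra hxinv
  have := isIntegral_of_finite_quotient_conductor O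
  have hx0 : x ≠ 0 := fun h ↦ hxQ (h ▸ Q.zero_mem)
  refine hr0 ?_
  rw [← Ideal.mem_bot, ← Ideal.iInf_pow_eq_bot_of_isDomain Q hQ.ne_top, Ideal.mem_iInf]
  intro j
  have hrx : CutsOutFiber p (r * x ^ j) :=
    hr.mul fun P hP h ↦ hx P hP (hP.mem_of_pow_mem j h)
  obtain ⟨n, hn, hmem⟩ := exists_pow_mem_of_saturated O hrx.saturated
  have ha0 : (r * x ^ j) ^ n ≠ 0 := pow_ne_zero n (mul_ne_zero hr0 (pow_ne_zero j hx0))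
  have hap : (⟨_, hmem⟩ : O) ∈ p ^ (j * n) :=
    hH.mem_pow_of_eq_pow_mul (hH.algebraMap_mem hO hx0) hxinv ha0
      (fun q _ haq ↦ (hrx.pow hn).eq_of_isMaximal haq)
      (hH.algebraMap_mem hO (pow_ne_zero n hr0)) (by simp only [map_pow, map_mul]; ring)
  have haQ : (r * x ^ j) ^ n ∈ Q ^ (j * n) := by
    subst hQp
    exact Ideal.le_comap_pow (algebraMap O R) (j * n) hap
  rw [mul_pow, ← pow_mul, mul_comm (r ^ n)] at haQ
  have hrQ : r ^ n ∈ Q ^ (j * n) :=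
    (hQ.mul_mem_pow Q haQ).resolve_left fun h ↦ hxQ (hQ.mem_of_pow_mem _ h)
  rwa [pow_mul, ← Ideal.dvd_span_singleton, ← Ideal.span_singleton_pow,
    UniqueFactorizationMonoid.pow_dvd_pow_iff_dvd hn, Ideal.dvd_span_singleton] at hrQ

lemma eq_of_under_eq_of_ne_bot (hH : IsTKOvermonoid O H) (htor : IsMulTorsion (ClassGroup R))
    {P Q : Ideal R} (hP : P.IsPrime) (hQ : Q.IsPrime) (hPQ : P.under O = Q.under O)
    (hP0 : P ≠ ⊥) : P = Q := by
  by_contra hne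
  have := isIntegral_of_finite_quotient_conductor O
  have hPmax : P.IsMaximal := hP.isMaximal hP0
  have hO : O.conductor ≠ ⊥ := ideal_ne_bot_of_finite_quotient
    (Ring.not_isField_iff_exists_prime.mpr ⟨P, hP0, hP⟩) _
  have hpmax : (P.under O).IsMaximal := .under O P
  have hp0 : P.under O ≠ ⊥ := mt (Ideal.eq_bot_of_comap_eq_bot (R := O)) hP0
  obtain ⟨r, hr0, hr⟩ := exists_cutsOutFiber htor hp0
  obtain ⟨x, m, hm, hxP⟩ := exists_span_singleton_eq_pow htor hP0
  obtain ⟨e, y, hrxy, hyP⟩ := exists_pow_eq_pow_mul_notMem hP0 hxP hr0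
  have hx (M : Ideal R) (hM : M.IsPrime) (hxM : x ∈ M) : M = P := by
    rw [← Ideal.span_singleton_le_iff_mem, hxP, Ideal.IsPrime.pow_le_iff hm] at hxM
    exact (hPmax.eq_of_le hM.ne_top hxM).symm
  have hy (M : Ideal R) (hM : M.IsPrime) (hyM : y ∈ M) : M.under O = P.under O :=
    (hr.pow hm M hM).mp (hrxy ▸ M.mul_mem_left _ hyM)
  have hxinv := hH.inv_mem_of_notMem hO hr0 hr hQ hPQ.symm (fun h ↦ hne (hx Q hQ h).symm)
    fun M hM hxM ↦ by rw [hx M hM hxM]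
  have hyinv := hH.inv_mem_of_notMem hO hr0 hr hP rfl hyP hy
  have hrinv : (algebraMap R (FractionRing R) (r ^ m))⁻¹ ∈ H := by
    rw [hrxy, map_mul, mul_inv, map_pow, ← inv_pow]
    exact mul_mem (pow_mem hxinv e) hyinv
  exact hP.ne_top (P.eq_top_of_isUnit_mem ((hr.pow hm P hP).mpr rfl)
    (hH.isUnit_of_inv_mem_of_saturated (pow_ne_zero m hr0) (hr.pow hm).saturated hrinv))

lemma eq_of_under_eq (hH : IsTKOvermonoid O H) (htor : IsMulTorsion (ClassGroup R))
    {P Q : Ideal R} (hP : P.IsPrime) (hQ : Q.IsPrime) (hPQ : P.under O = Q.under O) : P = Q := by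
  rcases eq_or_ne P ⊥ with rfl | hP0
  · have := isIntegral_of_finite_quotient_conductor O
    refine (Ideal.eq_bot_of_comap_eq_bot (R := O) ?_).symm
    rw [← Ideal.under_def, ← hPQ, Ideal.under_bot]
  · exact hH.eq_of_under_eq_of_ne_bot htor hP hQ hPQ hP0

end IsTKOvermonoid

theorem transfer_krull_root_extension_general {R : Type*} [CommRing R] [IsDedekindDomain R]
    (O : Subring R) (htor : IsMulTorsion (ClassGroup R)) [Finite (R ⧸ O.conductor)]
    (H : Submonoid (FractionRing R)) (hH : IsTKOvermonoid O H) :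
    (∀ a : R, ∃ n : ℕ, 0 < n ∧ a ^ n ∈ O) ∧
    Function.Bijective (PrimeSpectrum.comap (Subring.subtype O) :
      PrimeSpectrum R → PrimeSpectrum ↥O) := by
  have := isIntegral_of_finite_quotient_conductor O
  refine ⟨fun a ↦ ?_, fun P Q hPQ ↦ ?_, Algebra.IsIntegral.comap_surjective O R⟩
  · obtain ⟨n, hn, han⟩ := exists_pow_mem_of_saturated O (a := a)
      fun P Q hP hQ hPQ ha ↦ hH.eq_of_under_eq htor hP hQ hPQ ▸ ha
    exact ⟨n, Nat.pos_of_ne_zero hn, han⟩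
  · exact PrimeSpectrum.ext (hH.eq_of_under_eq htor P.isPrime Q.isPrime
      (congrArg PrimeSpectrum.asIdeal hPQ))

theorem transfer_krull_root_extension
    {R : Type*} [CommRing R] [IsDomain R] [IsDedekindDomain R]
    (O : Subring R) (hne : O ≠ ⊤) (hfg : Module.Finite ↥O R)
    (hfrac : ∀ r : R, ∃ a b : ↥O, (b : R) ≠ 0 ∧ (b : R) * r = (a : R))
    (htor : ∀ c : ClassGroup R, ∃ n : ℕ, 0 < n ∧ c ^ n = 1)
    (hfin : Finite (R ⧸ O.conductor))
    (hcls : ∀ c : ClassGroup R, ∃ (P : Ideal R) (hP : P ∈ (Ideal R)⁰),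
      P.IsPrime ∧ ¬ O.conductor ≤ P ∧ ClassGroup.mk0 ⟨P, hP⟩ = c)
    (H : Submonoid (FractionRing R)) (hH : IsTKOvermonoid O H)
    (hpic : Nonempty (ClassGroup ↥O ≃* ClassGroup R)) :
    (∀ a : R, ∃ n : ℕ, 0 < n ∧ a ^ n ∈ O) ∧
    Function.Bijective (PrimeSpectrum.comap (Subring.subtype O) :
      PrimeSpectrum R → PrimeSpectrum ↥O) := by
  exact transfer_krull_root_extension_general O
    (fun c ↦ isOfFinOrder_iff_pow_eq_one.mpr (htor c)) H hH
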